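/- arXiv:1707.01156 — 2 statements merged into one kernel-verified Lean document; each statement's English description precedes it below -/
import Mathlib

section
/- If a Γ-equivariant A-module M descends to A^{⟨s_i⟩} for every simple reflection s_i of Γ (i = 1, …, n), then M descends to A^Γ. -/
open scoped TensorProduct

noncomputable section

abbrev Vd (d : ℕ) := Fin d → ℂ
abbrev Ad (d : ℕ) := MvPolynomial (Fin d) ℂ

/-- Action of `g ∈ GL(V)` on polynomials: substitute `X j ↦ (g⁻¹ x)_j`. -/
def glAct {d : ℕ} (g : GL (Fin d) ℂ) : Ad d →ₐ[ℂ] Ad d :=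
  MvPolynomial.aeval fun j =>
    ∑ k, ((g⁻¹ : GL (Fin d) ℂ) : Matrix (Fin d) (Fin d) ℂ) j k • MvPolynomial.X k

/-- Embedding of linear forms on `V` as degree-one polynomials. -/
def lin {d : ℕ} (θ : Vd d →ₗ[ℂ] ℂ) : Ad d :=
  ∑ j, θ (Pi.single j 1) • MvPolynomial.X j

structure CoxeterSetup (d n : ℕ) where
  Γ : Subgroup (GL (Fin d) ℂ)
  finite : Finite Γ
  s : Fin n → Γ
  gen : Subgroup.closure (Set.range s) = (⊤ : Subgroup Γ)
  α : Fin n → (Vd d →ₗ[ℂ] ℂ)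
  coroot : Fin n → Vd d
  pairing : ∀ i, α i (coroot i) = 2
  refl : ∀ i (v : Vd d),
    ((s i : GL (Fin d) ℂ) : Matrix (Fin d) (Fin d) ℂ).mulVec v = v - α i v • coroot i


/-- The subalgebra of `Γ'`-invariant polynomials. -/
def FixedSub {d n : ℕ} (S : CoxeterSetup d n) (Γ' : Subgroup S.Γ) : Subalgebra ℂ (Ad d) where
  carrier := {f | ∀ g ∈ Γ', glAct (g : GL (Fin d) ℂ) f = f}
  mul_mem' := fun hf hg g hgmem => by simp [map_mul, hf g hgmem, hg g hgmem]
  add_mem' := fun hf hg g hgmem => by simp [map_add, hf g hgmem, hg g hgmem]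
  algebraMap_mem' := fun c g _ => by simp

/-- `M` (with `Γ'`-action `ρ`) descends to `A^{Γ'}`. -/
def Descends {d n : ℕ} (S : CoxeterSetup d n) (Γ' : Subgroup S.Γ) (M : Type)
    [AddCommGroup M] [Module ℂ M] [Module (Ad d) M] [IsScalarTower ℂ (Ad d) M]
    (ρ : Γ' →* Module.End ℂ M) : Prop :=
  ∃ (N : Type) (_ : AddCommGroup N) (_ : Module (FixedSub S Γ') N)
    (e : ((Ad d) ⊗[FixedSub S Γ'] N) ≃ₗ[Ad d] M),
    ∀ (g : Γ') (a : Ad d) (x : N),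
      ρ g (e (a ⊗ₜ x)) = e ((glAct ((g : S.Γ) : GL (Fin d) ℂ) a) ⊗ₜ x)


set_option linter.unusedSectionVars false

structure RG {A Γ ι : Type} [CommRing A] [Algebra ℂ A] [Group Γ]
    (σ : Γ →* (A →ₐ[ℂ] A)) (s : ι → Γ) (α : ι → A) (F : ℕ → AddSubgroup A) : Prop where
  gen : Subgroup.closure (Set.range s) = ⊤
  prime : ∀ i, Prime (α i)
  neg : ∀ i, σ (s i) (α i) = - α i
  dvd : ∀ i a, α i ∣ a - σ (s i) a
  faith : ∀ g, (∀ a, σ g a = a) → g = 1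
  unit : ∀ u : A, IsUnit u → ∃ c : ℂ, u = algebraMap ℂ A c
  F0 : ∀ a ∈ F 0, a = 0
  Fex : ∀ a, ∃ k, a ∈ F k
  Fmono : ∀ k l, k ≤ l → F k ≤ F l
  Fσ : ∀ g k a, a ∈ F k → σ g a ∈ F k
  Fα : ∀ i k b, α i * b ∈ F (k + 1) → b ∈ F k

namespace RG

theorem Tmul {Γ X : Type} [Group Γ] [AddCommGroup X] (T : Γ →* AddMonoid.End X) (g h : Γ) (x : X) :
    T (g * h) x = T g (T h x) := by
  rw [map_mul]; rfl

/-- averaging argument in filtered objects -/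
theorem filtered {A Γ ι X : Type} [CommRing A] [Algebra ℂ A] [Group Γ] [Fintype Γ]
    [AddCommGroup X] [Module A X] (s : ι → Γ) (α : ι → A)
    (gen : Subgroup.closure (Set.range s) = ⊤)
    (T : Γ →* AddMonoid.End X) (G : ℕ → AddSubgroup X)
    (G0 : ∀ x ∈ G 0, x = 0) (GT : ∀ k g x, x ∈ G k → T g x ∈ G k)
    (Gd : ∀ i k x, x ∈ G (k + 1) → ∃ w ∈ G k, x - T (s i) x = α i • w) :
    ∀ k x, x ∈ G k → x ∈ Submodule.span A {y | (∀ g, T g y = y) ∧ ∃ k, y ∈ G k} := by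
  intro k
  induction k with
  | zero => intro x hx; rw [G0 x hx]; exact zero_mem _
  | succ k ih =>
    set L := Submodule.span A {y | (∀ g, T g y = y) ∧ ∃ k, y ∈ G k} with hL
    have key : ∀ g : Γ, ∀ x ∈ G (k + 1), x - T g x ∈ L := by
      intro g
      have hg : g ∈ Subgroup.closure (Set.range s) := by rw [gen]; trivial
      induction hg using Subgroup.closure_induction with
      | mem g hg =>
        obtain ⟨i, rfl⟩ := hg
        intro x hx
        obtain ⟨w, hw, e⟩ := Gd i k x hx
        rw [e]; exact L.smul_mem _ (ih w hw)
      | one => intro x hx; simp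
      | mul a b _ _ ha hb =>
        intro x hx
        have h1 := hb x hx
        have h2 := ha (T b x) (GT _ _ _ hx)
        have := L.add_mem h1 h2
        rw [Tmul]
        simpa using this
      | inv a _ ha =>
        intro x hx
        have h2 := ha (T a⁻¹ x) (GT _ _ _ hx)
        have e : T a (T a⁻¹ x) = x := by
          rw [← Tmul]; simp
        rw [e] at h2
        have := L.neg_mem h2
        simpa using this
    intro x hx
    have h1 : ∑ g : Γ, (x - T g x) ∈ L := L.sum_mem fun g _ => key g x hx
    have h2 : ∑ g : Γ, T g x ∈ L := by
      apply Submodule.subset_span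
      refine ⟨fun h => ?_, k + 1, AddSubgroup.sum_mem _ fun g _ => GT _ _ _ hx⟩
      rw [map_sum]
      simp only [← Tmul]
      exact Fintype.sum_equiv (Equiv.mulLeft h) _ _ (fun g => rfl)
    have h3 := L.add_mem h1 h2
    rw [← Finset.sum_add_distrib] at h3
    simp only [sub_add_cancel, Finset.sum_const, Finset.card_univ] at h3
    have h4 := L.smul_mem (algebraMap ℂ A (Fintype.card Γ : ℂ)⁻¹) h3
    rw [← Nat.cast_smul_eq_nsmul A, smul_smul] at h4
    have : algebraMap ℂ A (Fintype.card Γ : ℂ)⁻¹ * (Fintype.card Γ : A) = 1 := by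
      rw [← map_natCast (algebraMap ℂ A), ← map_mul, inv_mul_cancel₀, map_one]
      exact_mod_cast Fintype.card_ne_zero
    rwa [this, one_smul] at h4

variable {A Γ ι : Type} [CommRing A] [IsDomain A] [Algebra ℂ A] [Group Γ] [Fintype Γ]
    {σ : Γ →* (A →ₐ[ℂ] A)} {s : ι → Γ} {α : ι → A} {F : ℕ → AddSubgroup A}

theorem σmul (g h : Γ) (a : A) : σ (g * h) a = σ g (σ h a) := by
  rw [map_mul]; rfl

theorem σinv (g : Γ) (a : A) : σ g (σ g⁻¹ a) = a := by
  rw [← σmul]; simp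

theorem σinv' (g : Γ) (a : A) : σ g⁻¹ (σ g a) = a := by
  rw [← σmul]; simp

theorem dvd_of_σ (g : Γ) (a b : A) (h : σ g a ∣ b) : a ∣ σ g⁻¹ b := by
  have := map_dvd (σ g⁻¹) h
  rwa [σinv'] at this

theorem σ_dvd (g : Γ) (a b : A) (h : a ∣ σ g⁻¹ b) : σ g a ∣ b := by
  have := map_dvd (σ g) h
  rwa [σinv] at this

theorem two_cancel (x : A) (p : A) (h : p ∣ (2 : A) * x) : p ∣ x := by
  have := h.mul_left (algebraMap ℂ A (2⁻¹))
  have e : algebraMap ℂ A (2⁻¹) * 2 = 1 := by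
    rw [← map_ofNat (algebraMap ℂ A) 2, ← map_mul]; norm_num
  rwa [← mul_assoc, e, one_mul] at this

theorem nat_cancel (n : ℕ) (hn : n ≠ 0) (x : A) (p : A) (h : p ∣ (n : A) * x) : p ∣ x := by
  have := h.mul_left (algebraMap ℂ A ((n : ℂ)⁻¹))
  have e : algebraMap ℂ A ((n : ℂ)⁻¹) * n = 1 := by
    rw [← map_natCast (algebraMap ℂ A), ← map_mul, inv_mul_cancel₀, map_one]
    exact_mod_cast hn
  rwa [← mul_assoc, e, one_mul] at this

variable (H : RG σ s α F)
include H

theorem root_prime (k : Γ) (i : ι) : Prime (σ k (α i)) := by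
  obtain ⟨h0, h1, h2⟩ := H.prime i
  refine ⟨fun h => h0 ?_, fun h => h1 ?_, fun a b h => ?_⟩
  · rw [← σinv' (σ := σ) k (α i), h, map_zero]
  · have := h.map (σ k⁻¹); rwa [σinv'] at this
  · have := dvd_of_σ _ _ _ h
    rw [map_mul] at this
    exact (h2 _ _ this).imp (σ_dvd _ _ _) (σ_dvd _ _ _)

theorem root_dvd (k : Γ) (i : ι) (a : A) : σ k (α i) ∣ a - σ (k * s i * k⁻¹) a := by
  have := map_dvd (σ k) (H.dvd i (σ k⁻¹ a))
  rw [map_sub, σinv] at this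
  simpa only [σmul] using this

theorem root_neg (k : Γ) (i : ι) : σ (k * s i * k⁻¹) (σ k (α i)) = - σ k (α i) := by
  simp only [σmul, σinv', H.neg, map_neg]

theorem root_F (g : Γ) (i : ι) (k : ℕ) (b : A) (h : σ g (α i) * b ∈ F (k + 1)) : b ∈ F k := by
  have := H.Fσ g⁻¹ _ _ h
  rw [map_mul, σinv'] at this
  have := H.Fσ g _ _ (H.Fα _ _ _ this)
  rwa [σinv] at this

theorem pow_root (g : Γ) (i : ι) (x : A) (h : ∀ n, σ g (α i) ^ n ∣ x) : x = 0 := by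
  obtain ⟨n, hn⟩ := H.Fex x
  obtain ⟨y, rfl⟩ := h n
  have : y ∈ F 0 := by
    clear h
    induction n with
    | zero => simpa using hn
    | succ n ih => rw [pow_succ', mul_assoc] at hn; exact ih (H.root_F _ _ _ _ hn)
  rw [H.F0 _ this, mul_zero]

theorem unip (k : Γ) (i : ι) (h : Γ) (h1 : σ h (σ k (α i)) = σ k (α i))
    (h2 : ∀ x, σ k (α i) ∣ σ h x - x) : h = 1 := by
  set p := σ k (α i) with hp
  have pp : Prime p := H.root_prime k i
  have hj : ∀ (j : ℕ), σ (h ^ j) p = p := by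
    intro j
    induction j with
    | zero => simp
    | succ j ih => rw [pow_succ, σmul, h1, ih]
  have hj2 : ∀ (j : ℕ) x, p ∣ σ (h ^ j) x - x := by
    intro j
    induction j with
    | zero => intro x; simp
    | succ j ih =>
      intro x
      have := dvd_add (ih (σ h x)) (h2 x)
      rw [pow_succ, σmul]
      simpa using this
  have key : ∀ (n : ℕ) x, p ^ (n + 1) ∣ σ h x - x := by
    intro n
    induction n with
    | zero => intro x; simpa using h2 x
    | succ n ih =>
      intro x
      obtain ⟨y, hy⟩ := ih x
      rw [hy, pow_succ _ (n + 1)]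
      apply mul_dvd_mul_left
      have e1 : ∑ j ∈ Finset.range (orderOf h), σ (h ^ j) (σ h x - x) = 0 := by
        have : ∀ j, σ (h ^ j) (σ h x - x) = σ (h ^ (j + 1)) x - σ (h ^ j) x := by
          intro j; rw [pow_succ, σmul, map_sub]
        simp only [this]
        rw [Finset.sum_range_sub (fun j => σ (h ^ j) x), pow_orderOf_eq_one]
        simp
      rw [hy] at e1
      have e0 : ∀ j, σ (h ^ j) (p ^ (n + 1) * y) = p ^ (n + 1) * σ (h ^ j) y := by
        intro j; rw [map_mul (σ (h ^ j)), map_pow (σ (h ^ j)), hj]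
      simp only [e0] at e1
      rw [← Finset.mul_sum] at e1
      have e2 := (mul_eq_zero.1 e1).resolve_left (pow_ne_zero _ pp.ne_zero)
      have e3 : p ∣ ∑ j ∈ Finset.range (orderOf h), (σ (h ^ j) y - y) :=
        Finset.dvd_sum fun j _ => hj2 j y
      rw [Finset.sum_sub_distrib, e2, zero_sub, dvd_neg] at e3
      simp only [Finset.sum_const, Finset.card_range, nsmul_eq_mul] at e3
      exact nat_cancel _ (orderOf_pos h).ne' _ _ e3
  apply H.faith
  intro a
  rw [← sub_eq_zero]
  apply H.pow_root k i
  intro n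
  exact (pow_dvd_pow _ (Nat.le_succ n)).trans (key n a)

theorem refl_sq (k : Γ) (i : ι) : (k * s i * k⁻¹) * (k * s i * k⁻¹) = 1 := by
  apply H.unip k i
  · rw [σmul, H.root_neg, map_neg, H.root_neg, neg_neg]
  · intro x
    have h1 := H.root_dvd k i x
    have h2 := H.root_dvd k i (σ (k * s i * k⁻¹) x)
    rw [σmul, ← dvd_neg]
    have := dvd_add h1 h2
    simpa using this

theorem s_sq (i : ι) : s i * s i = 1 := by
  simpa using H.refl_sq 1 i

theorem ss (i : ι) (a : A) : σ (s i) (σ (s i) a) = a := by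
  rw [← σmul, H.s_sq]; simp

theorem refl_eq (k k' : Γ) (i j : ι) (h : σ k (α i) ∣ σ k' (α j)) :
    k * s i * k⁻¹ = k' * s j * k'⁻¹ := by
  have ha := (H.root_prime k i).associated_of_dvd (H.root_prime k' j) h
  obtain ⟨u, hu⟩ := ha
  obtain ⟨c, hc⟩ := H.unit u u.isUnit
  set t := k * s i * k⁻¹
  set t' := k' * s j * k'⁻¹
  have e1 : σ t' (σ k (α i)) = - σ k (α i) := by
    have := H.root_neg k' j
    rw [← hu, map_mul, hc, AlgHom.commutes, ← neg_mul, ← hc] at this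
    exact mul_right_cancel₀ u.ne_zero this
  have : t * t' = 1 := by
    apply H.unip k i
    · rw [σmul, e1, map_neg, H.root_neg, neg_neg]
    · intro x
      have h1 := h.trans (H.root_dvd k' j x)
      have h2 := H.root_dvd k i (σ t' x)
      rw [σmul, ← dvd_neg]
      have := dvd_add h1 h2
      rw [sub_add_sub_cancel] at this
      rwa [neg_sub]
  calc t = t * (t' * t') := by rw [H.refl_sq k' j, mul_one]
    _ = t' := by rw [← mul_assoc, this, one_mul]

/-- divided difference -/
theorem dd (i : ι) (a : A) : ∃ b, a - σ (s i) a = α i * b ∧ σ (s i) b = b := by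
  obtain ⟨b, hb⟩ := H.dvd i a
  refine ⟨b, hb, ?_⟩
  have := congrArg (σ (s i)) hb
  rw [map_sub, H.ss, map_mul, H.neg, ← neg_sub, hb, neg_mul] at this
  exact (mul_left_cancel₀ (H.prime i).ne_zero (neg_injective this)).symm

theorem decomp (i : ι) (a : A) : ∃ a0 a1, σ (s i) a0 = a0 ∧ σ (s i) a1 = a1 ∧
    a = a0 + α i * a1 := by
  obtain ⟨b, hb, hb'⟩ := H.dd i a
  have e : algebraMap ℂ A (2⁻¹) * 2 = 1 := by
    rw [← map_ofNat (algebraMap ℂ A) 2, ← map_mul]; norm_num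
  refine ⟨algebraMap ℂ A 2⁻¹ * (a + σ (s i) a), algebraMap ℂ A 2⁻¹ * b, ?_, ?_, ?_⟩
  · rw [map_mul, map_add, H.ss, AlgHom.commutes, add_comm]
  · rw [map_mul, AlgHom.commutes, hb']
  · rw [mul_left_comm, ← hb, ← mul_add]
    linear_combination (-a) * e

omit H in
theorem lcm_exists (S : Finset A) (hS : ∀ p ∈ S, Prime p) :
    ∃ c : A, c ≠ 0 ∧ (∀ p ∈ S, p ∣ c) ∧ ∀ x, (∀ p ∈ S, p ∣ x) → c ∣ x := by
  classical
  induction S using Finset.induction_on with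
  | empty => exact ⟨1, one_ne_zero, by simp, by simp⟩
  | insert p S _ ih =>
    obtain ⟨c, h0, h1, h2⟩ := ih fun q hq => hS q (Finset.mem_insert_of_mem hq)
    have pp := hS p (Finset.mem_insert_self _ _)
    by_cases hpc : p ∣ c
    · refine ⟨c, h0, ?_, fun x hx => h2 x fun q hq => hx q (Finset.mem_insert_of_mem hq)⟩
      intro q hq
      rcases Finset.mem_insert.1 hq with rfl | hq
      · exact hpc
      · exact h1 q hq
    · refine ⟨c * p, mul_ne_zero h0 pp.ne_zero, ?_, ?_⟩
      · intro q hq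
        rcases Finset.mem_insert.1 hq with rfl | hq
        · exact dvd_mul_left _ _
        · exact (h1 q hq).mul_right _
      · intro x hx
        obtain ⟨y, rfl⟩ := h2 x fun q hq => hx q (Finset.mem_insert_of_mem hq)
        exact mul_dvd_mul_left _
          ((pp.dvd_or_dvd (hx p (Finset.mem_insert_self _ _))).resolve_left hpc)

/-- the discriminant-type element -/
theorem disc [Finite ι] : ∃ c : A, c ≠ 0 ∧ (∀ k i, σ k (α i) ∣ c) ∧
    (∀ x, (∀ k i, σ k (α i) ∣ x) → c ∣ x) ∧ ∀ i, σ (s i) c = - c := by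
  classical
  have := Fintype.ofFinite ι
  obtain ⟨c, h0, h1, h2⟩ := lcm_exists
    (Finset.univ.image fun q : Γ × ι => σ q.1 (α q.2)) (by
      intro p hp
      obtain ⟨q, -, rfl⟩ := Finset.mem_image.1 hp
      exact H.root_prime _ _)
  have h1' : ∀ k i, σ k (α i) ∣ c := fun k i =>
    h1 _ (Finset.mem_image.2 ⟨(k, i), Finset.mem_univ _, rfl⟩)
  have h2' : ∀ x, (∀ k i, σ k (α i) ∣ x) → c ∣ x := by
    intro x hx
    apply h2
    intro p hp
    obtain ⟨q, -, rfl⟩ := Finset.mem_image.1 hp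
    exact hx _ _
  refine ⟨c, h0, h1', h2', fun i => ?_⟩
  obtain ⟨u, hu⟩ : c ∣ σ (s i) c := by
    apply h2'
    intro k j
    have := map_dvd (σ (s i)) (h1' ((s i)⁻¹ * k) j)
    rwa [← σmul, mul_inv_cancel_left] at this
  have hu2 : u * σ (s i) u = 1 := by
    have := congrArg (σ (s i)) hu
    rw [H.ss, map_mul, hu, mul_assoc] at this
    exact (mul_left_cancel₀ h0 ((mul_one c).trans this)).symm
  obtain ⟨z, rfl⟩ := H.unit u (IsUnit.of_mul_eq_one _ hu2)
  rw [AlgHom.commutes] at hu2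
  have hz : (algebraMap ℂ A z - 1) * (algebraMap ℂ A z + 1) = 0 := by
    linear_combination hu2
  rcases mul_eq_zero.1 hz with hz | hz
  · exfalso
    rw [sub_eq_zero.1 hz, mul_one] at hu
    obtain ⟨c', hc'⟩ : α i ∣ c := by simpa using h1' 1 i
    have e : σ (s i) c' = - c' := by
      rw [hc', map_mul, H.neg] at hu
      apply mul_left_cancel₀ (H.prime i).ne_zero
      linear_combination -hu
    have hd : α i ∣ c' := by
      apply two_cancel
      have := H.dvd i c'
      rw [e] at this
      rw [two_mul]; simpa using this
    have hcc : c ∣ c' := by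
      apply h2'
      intro k j
      have := h1' k j
      rw [hc'] at this
      rcases (H.root_prime k j).dvd_or_dvd this with h | h
      · exact h.trans hd
      · exact h
    obtain ⟨y, hy⟩ := hcc
    have : c * 1 = c * (α i * y) := by
      rw [mul_one]; nth_rewrite 1 [hc']; rw [hy]; ring
    exact (H.prime i).not_isUnit (IsUnit.of_mul_eq_one _ (mul_left_cancel₀ h0 this).symm)
  · rw [hu]; linear_combination c * hz

theorem ideal_lemma {c : A} (h0 : c ≠ 0)
    (h2 : ∀ x, (∀ k i, σ k (α i) ∣ x) → c ∣ x) (h3 : ∀ i, σ (s i) c = - c)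
    (J : Ideal A) (hc : c ∈ J)
    (stab : ∀ i a0 a1, σ (s i) a0 = a0 → σ (s i) a1 = a1 → a0 + α i * a1 ∈ J → a1 ∈ J) :
    (1 : A) ∈ J := by
  have Js : ∀ i a, a ∈ J → σ (s i) a ∈ J ∧ ∃ w ∈ J, a - σ (s i) a = α i * w := by
    intro i a ha
    obtain ⟨a0, a1, e0, e1, rfl⟩ := H.decomp i a
    have m1 := stab i a0 a1 e0 e1 ha
    have e : a0 + α i * a1 - σ (s i) (a0 + α i * a1) = α i * (2 * a1) := by
      rw [map_add, map_mul, H.neg, e0, e1]; ring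
    refine ⟨?_, 2 * a1, J.mul_mem_left _ m1, e⟩
    rw [← sub_sub_cancel (a0 + α i * a1) (σ (s i) (a0 + α i * a1)), e]
    exact J.sub_mem ha (J.mul_mem_left _ (J.mul_mem_left _ m1))
  have Jσ : ∀ g, ∀ a ∈ J, σ g a ∈ J := by
    intro g
    have hg : g ∈ Submonoid.closure (Set.range s) := by
      have : (Subgroup.closure (Set.range s)).toSubmonoid = ⊤ := by rw [H.gen]; rfl
      rw [Subgroup.closure_toSubmonoid_of_finite] at this
      rw [this]; trivial
    induction hg using Submonoid.closure_induction with
    | mem g hg => obtain ⟨i, rfl⟩ := hg; exact fun a ha => (Js i a ha).1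
    | one => intro a ha; simpa using ha
    | mul x y _ _ hx hy => intro a ha; rw [σmul]; exact hx _ (hy _ ha)
  let T : Γ →* AddMonoid.End A :=
    { toFun := fun g => (σ g : A →+ A)
      map_one' := by ext a; change σ 1 a = a; simp
      map_mul' := fun g h => by ext a; exact σmul g h a }
  have hT : ∀ g a, T g a = σ g a := fun _ _ => rfl
  obtain ⟨k, hk⟩ := H.Fex c
  have hspan := filtered s α H.gen T (fun k => J.toAddSubgroup ⊓ F k)
    (fun x hx => H.F0 x hx.2) (fun k g x hx => ⟨Jσ g x hx.1, H.Fσ g k x hx.2⟩)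
    (by
      intro i k x hx
      obtain ⟨-, w, hw, e⟩ := Js i x hx.1
      refine ⟨w, ⟨hw, H.Fα i k w ?_⟩, e⟩
      rw [← e]
      exact (F (k + 1)).sub_mem hx.2 (H.Fσ _ _ _ hx.2)) k c ⟨hc, hk⟩
  -- character
  have hchar : ∀ g, ∃ e : ℂ, σ g c = algebraMap ℂ A e * c := by
    intro g
    have hg : g ∈ Submonoid.closure (Set.range s) := by
      have : (Subgroup.closure (Set.range s)).toSubmonoid = ⊤ := by rw [H.gen]; rfl
      rw [Subgroup.closure_toSubmonoid_of_finite] at this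
      rw [this]; trivial
    induction hg using Submonoid.closure_induction with
    | mem g hg => obtain ⟨i, rfl⟩ := hg; exact ⟨-1, by simp [h3]⟩
    | one => exact ⟨1, by simp⟩
    | mul x y _ _ hx hy =>
      obtain ⟨e, he⟩ := hx
      obtain ⟨f, hf⟩ := hy
      exact ⟨f * e, by rw [σmul, hf, map_mul, AlgHom.commutes, he, map_mul, mul_assoc]⟩
  choose χ' hχ' using hchar
  set χ : Γ → A := fun g => algebraMap ℂ A (χ' g) with hχdef
  have hχ : ∀ g, σ g c = χ g * c := hχ'
  have σχ : ∀ g h, σ g (χ h) = χ h := fun g h => by simp [hχdef]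
  have χmul : ∀ g h, χ (g * h) = χ g * χ h := by
    intro g h
    apply mul_right_cancel₀ h0
    rw [← hχ, σmul, hχ, map_mul, σχ, hχ]; ring
  have χone : χ 1 = 1 := by
    apply mul_right_cancel₀ h0
    rw [← hχ]; simp
  have χs : ∀ i, χ (s i) = -1 := by
    intro i
    apply mul_right_cancel₀ h0
    rw [← hχ, h3]; ring
  have χinv : ∀ g, χ g * χ g⁻¹ = 1 := fun g => by rw [← χmul]; simpa using χone
  let P : A → A := fun a => ∑ g, χ g⁻¹ * σ g a
  have Padd : ∀ a b, P (a + b) = P a + P b := by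
    intro a b; simp only [P, map_add, mul_add, Finset.sum_add_distrib]
  have Pσ : ∀ h a, σ h (P a) = χ h * P a := by
    intro h a
    simp only [P, map_sum, Finset.mul_sum]
    refine Fintype.sum_equiv (Equiv.mulLeft h) _ _ (fun g => ?_)
    simp only [Equiv.coe_mulLeft, map_mul, σχ, mul_inv_rev, χmul, AlgHom.mul_apply]
    linear_combination -(χ g⁻¹ * (σ h (σ g a))) * χinv h
  have Pdvd : ∀ a, c ∣ P a := by
    intro a
    apply h2
    intro k i
    apply two_cancel
    have := H.root_dvd k i (P a)
    have e : χ (k * s i * k⁻¹) = -1 := by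
      rw [χmul, χmul, χs]; linear_combination (-1 : A) * χinv k
    rw [Pσ, e] at this
    have e2 : 2 * P a = P a - -1 * P a := by ring
    rwa [e2]
  have Pinv : ∀ a b, (∀ g, σ g b = b) → P (a * b) = P a * b := by
    intro a b hb
    simp only [P, map_mul, hb, Finset.sum_mul, mul_assoc]
  have hall : ∀ a, ∃ j ∈ J, P (a * c) = c * j := by
    generalize hcd : c = d at hspan
    have hall' : ∀ a, ∃ j ∈ J, P (a * d) = c * j := by
     clear hcd
     induction hspan using Submodule.span_induction with
     | mem b hb =>
       obtain ⟨hb1, k, hb2⟩ := hb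
       intro a
       obtain ⟨q, hq⟩ := Pdvd a
       refine ⟨q * b, J.mul_mem_left _ hb2.1, ?_⟩
       rw [Pinv a b hb1, hq, mul_assoc]
     | zero => intro a; exact ⟨0, J.zero_mem, by simp [P]⟩
     | add x y _ _ hx hy =>
       intro a
       obtain ⟨j, hj, e⟩ := hx a
       obtain ⟨j', hj', e'⟩ := hy a
       exact ⟨j + j', J.add_mem hj hj', by rw [mul_add, Padd, e, e', mul_add]⟩
     | smul r x _ hx =>
       intro a
       obtain ⟨j, hj, e⟩ := hx (a * r)
       exact ⟨j, hj, by rw [smul_eq_mul, ← mul_assoc, e]⟩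
    rw [← hcd] at hall' ⊢
    exact hall'
  obtain ⟨j, hj, e⟩ := hall 1
  have e2 : P (1 * c) = c * (Fintype.card Γ : A) := by
    rw [one_mul]
    have : ∀ g ∈ (Finset.univ : Finset Γ), χ g⁻¹ * σ g c = c := by
      intro g _
      rw [hχ]; linear_combination c * χinv g
    simp only [P]
    rw [Finset.sum_congr rfl this]; simp [mul_comm]
  rw [e2] at e
  have e3 := mul_left_cancel₀ h0 e
  rw [← e3] at hj
  have h4 := J.mul_mem_left (algebraMap ℂ A (Fintype.card Γ : ℂ)⁻¹) hj
  have : algebraMap ℂ A (Fintype.card Γ : ℂ)⁻¹ * (Fintype.card Γ : A) = 1 := by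
    rw [← map_natCast (algebraMap ℂ A), ← map_mul, inv_mul_cancel₀, map_one]
    exact_mod_cast Fintype.card_ne_zero
  rwa [this] at h4

/-- GKM lemma -/
theorem gkm [DecidableEq Γ] {c : A} (h1 : ∀ k i, σ k (α i) ∣ c) :
    (Pi.single 1 c : Γ → A) ∈ Submodule.span A
      {z : Γ → A | ∀ g h, z (g * h) = σ h⁻¹ (z g)} := by
  let T : Γ →* AddMonoid.End (Γ → A) :=
    { toFun := fun h =>
        { toFun := fun z g => σ h (z (g * h))
          map_zero' := by ext; simp
          map_add' := fun a b => by ext; simp }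
      map_one' := by
        ext z g
        change σ 1 (z (g * 1)) = z g
        simp
      map_mul' := fun a b => by
        ext z g
        change σ (a * b) (z (g * (a * b))) = σ a (σ b (z (g * a * b)))
        rw [σmul, mul_assoc] }
  have hT : ∀ h z g, T h z g = σ h (z (g * h)) := fun _ _ _ => rfl
  let G : ℕ → AddSubgroup (Γ → A) := fun n =>
    { carrier := {z | (∀ g, z g ∈ F n) ∧ ∀ g k i, σ k (α i) ∣ z g - z (g * (k * s i * k⁻¹))}
      zero_mem' := ⟨fun g => (F n).zero_mem, fun g k i => by simp⟩
      add_mem' := fun {a b} ha hb => ⟨fun g => (F n).add_mem (ha.1 g) (hb.1 g), fun g k i => by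
        have := dvd_add (ha.2 g k i) (hb.2 g k i)
        simp only [Pi.add_apply]
        rwa [add_sub_add_comm]⟩
      neg_mem' := fun {a} ha => ⟨fun g => (F n).neg_mem (ha.1 g), fun g k i => by
        have := (dvd_neg).2 (ha.2 g k i)
        simp only [Pi.neg_apply]
        rwa [neg_sub_neg, ← neg_sub]⟩ }
  have hG : ∀ n z, z ∈ G n ↔
      ((∀ g, z g ∈ F n) ∧ ∀ g k i, σ k (α i) ∣ z g - z (g * (k * s i * k⁻¹))) :=
    fun _ _ => Iff.rfl
  have GT : ∀ n g x, x ∈ G n → T g x ∈ G n := by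
    intro n h z hz
    refine ⟨fun g => H.Fσ _ _ _ (hz.1 _), fun g k i => ?_⟩
    rw [hT, hT]
    have := map_dvd (σ h) (hz.2 (g * h) (h⁻¹ * k) i)
    rw [← σmul, map_sub] at this
    convert this using 4 <;> group
  have Gd : ∀ i n x, x ∈ G (n + 1) → ∃ w ∈ G n, x - T (s i) x = α i • w := by
    intro i n z hz
    have hex : ∀ g, ∃ b, z g - σ (s i) (z (g * s i)) = α i * b := by
      intro g
      have a1 := hz.2 g 1 i
      have a2 := H.dvd i (z (g * s i))
      simp only [map_one, AlgHom.one_apply, one_mul, inv_one, mul_one] at a1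
      have := dvd_add a1 a2
      rwa [sub_add_sub_cancel] at this
    choose w hw using hex
    have hα := (H.prime i).ne_zero
    refine ⟨w, ⟨fun g => ?_, fun g k j => ?_⟩, ?_⟩
    · apply H.Fα i
      rw [← hw]
      exact (F _).sub_mem (hz.1 _) (H.Fσ _ _ _ (hz.1 _))
    · by_cases hd : σ k (α j) ∣ α i
      · have hr : k * s j * k⁻¹ = s i := by
          simpa using H.refl_eq k 1 j i (by simpa using hd)
        rw [hr]
        have e1 := hw g
        have e2 := congrArg (σ (s i)) (hw (g * s i))
        rw [mul_assoc, H.s_sq, mul_one, map_sub, H.ss, map_mul, H.neg] at e2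
        have e3 : w g = σ (s i) (w (g * s i)) := by
          apply mul_left_cancel₀ hα
          linear_combination -e1 - e2
        have e4 := H.root_dvd k j (w (g * s i))
        rw [hr] at e4
        rw [e3, ← dvd_neg, neg_sub]
        exact e4
      · have b1 := hz.2 g k j
        have b2 := (GT _ (s i) z hz).2 g k j
        rw [hT, hT] at b2
        have b3 := dvd_sub b1 b2
        have e : z g - z (g * (k * s j * k⁻¹)) - (σ (s i) (z (g * s i)) -
            σ (s i) (z (g * (k * s j * k⁻¹) * s i))) =
            α i * (w g - w (g * (k * s j * k⁻¹))) := by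
          linear_combination hw g - hw (g * (k * s j * k⁻¹))
        rw [e] at b3
        exact ((H.root_prime k j).dvd_or_dvd b3).resolve_left hd
    · ext g
      exact hw g
  obtain ⟨n, hn⟩ := H.Fex c
  have hz0 : (Pi.single 1 c : Γ → A) ∈ G n := by
    have hd : ∀ k i g, σ k (α i) ∣ (Pi.single 1 c : Γ → A) g := by
      intro k i g
      rw [Pi.single_apply]
      split_ifs
      · exact h1 k i
      · exact dvd_zero _
    refine ⟨fun g => ?_, fun g k i => dvd_sub (hd _ _ _) (hd _ _ _)⟩
    rw [Pi.single_apply]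
    split_ifs
    · exact hn
    · exact (F n).zero_mem
  have := filtered s α H.gen T G (fun x hx => by ext g; exact H.F0 _ (hx.1 g)) GT Gd n _ hz0
  refine Submodule.span_mono ?_ this
  rintro z ⟨hz, -⟩ g h
  have := congrFun (hz h) g
  rw [hT] at this
  rw [← this, σinv']

theorem main_lemma [Finite ι] {M : Type} [AddCommGroup M] [Module A M]
    (ρ : Γ →* AddMonoid.End M) (hρ : ∀ g a m, ρ g (a • m) = σ g a • ρ g m)
    (hdec : ∀ i m, ∃ m0 m1, ρ (s i) m0 = m0 ∧ ρ (s i) m1 = m1 ∧ m = m0 + α i • m1)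
    (L L' : Submodule A M)
    (stab : ∀ i m0 m1, ρ (s i) m0 = m0 → ρ (s i) m1 = m1 → m0 + α i • m1 ∈ L → m1 ∈ L)
    (stab' : ∀ i m0 m1, ρ (s i) m0 = m0 → ρ (s i) m1 = m1 → m0 + α i • m1 ∈ L' → m1 ∈ L')
    (hρ' : ∀ g, ∀ m ∈ L', ρ g m ∈ L')
    (hinv : ∀ m ∈ L', (∀ g, ρ g m = m) → m ∈ L) : L' ≤ L := by
  classical
  obtain ⟨c, h0, h1, h2, h3⟩ := H.disc
  let J : Ideal A :=
    { carrier := {a | ∀ m ∈ L', a • m ∈ L}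
      zero_mem' := fun m _ => by simp
      add_mem' := fun {a b} ha hb m hm => by
        rw [add_smul]; exact L.add_mem (ha m hm) (hb m hm)
      smul_mem' := fun r a ha m hm => by
        rw [smul_assoc]; exact L.smul_mem _ (ha m hm) }
  have hJ : ∀ a, a ∈ J ↔ ∀ m ∈ L', a • m ∈ L := fun _ => Iff.rfl
  have hcJ : c ∈ J := by
    intro m hm
    have key : ∀ z ∈ Submodule.span A {z : Γ → A | ∀ g h, z (g * h) = σ h⁻¹ (z g)},
        ∑ g, z g • ρ g⁻¹ m ∈ L := by
      intro z hz
      induction hz using Submodule.span_induction with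
      | mem z hz =>
        have e : ∑ g, z g • ρ g⁻¹ m = ∑ g, ρ g (z 1 • m) := by
          refine Fintype.sum_equiv (Equiv.inv Γ) _ _ (fun g => ?_)
          have := hz 1 g
          rw [one_mul] at this
          simp only [Equiv.inv_apply, hρ]
          rw [this]
        rw [e]
        apply hinv
        · exact L'.sum_mem fun g _ => hρ' g _ (L'.smul_mem _ hm)
        · intro h
          rw [map_sum]
          refine Fintype.sum_equiv (Equiv.mulLeft h) _ _ (fun g => ?_)
          rw [← Tmul]; rfl
      | zero => simp
      | add x y _ _ hx hy =>
        simp only [Pi.add_apply, add_smul, Finset.sum_add_distrib]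
        exact L.add_mem hx hy
      | smul r x _ hx =>
        simp only [Pi.smul_apply, smul_assoc, ← Finset.smul_sum]
        exact L.smul_mem _ hx
    have := key _ (H.gkm h1)
    rw [Finset.sum_eq_single 1] at this
    · simpa using this
    · intro g _ hg; simp [hg]
    · simp
  have hone := H.ideal_lemma h0 h2 h3 J hcJ (by
    intro i c0 c1 e0 e1 hc m hm
    obtain ⟨m0, m1, f0, f1, rfl⟩ := hdec i m
    have hm1 := stab' i m0 m1 f0 f1 hm
    have hm0 : m0 ∈ L' := by
      have := L'.sub_mem hm (L'.smul_mem (α i) hm1)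
      simpa using this
    have step : ∀ n ∈ L', ρ (s i) n = n → c1 • n ∈ L := by
      intro n hn hf
      have := hc n hn
      rw [add_smul, mul_smul] at this
      exact stab i (c0 • n) (c1 • n) (by rw [hρ, e0, hf]) (by rw [hρ, e1, hf]) this
    rw [smul_add, smul_comm]
    exact L.add_mem (step _ hm0 f0) (L.smul_mem _ (step _ hm1 f1)))
  intro m hm
  simpa using hone m hm

end RG

theorem glAct_X {d : ℕ} (g : GL (Fin d) ℂ) (j : Fin d) : glAct g (MvPolynomial.X j) =
    ∑ k, ((g⁻¹ : GL (Fin d) ℂ) : Matrix (Fin d) (Fin d) ℂ) j k • MvPolynomial.X k := by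
  simp [glAct]

theorem coeff_linear {d : ℕ} (v : Fin d → ℂ) (l : Fin d) :
    MvPolynomial.coeff (Finsupp.single l 1) (∑ k, v k • (MvPolynomial.X k : Ad d)) = v l := by
  classical
  rw [MvPolynomial.coeff_sum, Finset.sum_eq_single l]
  · simp
  · intro k _ hk
    rw [MvPolynomial.coeff_smul, MvPolynomial.coeff_X, if_neg]
    · simp
    · rwa [Finsupp.single_left_inj Nat.one_ne_zero]
  · simp

theorem glAct_mul {d : ℕ} (g h : GL (Fin d) ℂ) : glAct (g * h) = (glAct g).comp (glAct h) := by
  apply MvPolynomial.algHom_ext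
  intro j
  rw [AlgHom.comp_apply, glAct_X, glAct_X, map_sum]
  simp only [map_smul, glAct_X, Finset.smul_sum, smul_smul]
  rw [Finset.sum_comm]
  refine Finset.sum_congr rfl fun k _ => ?_
  rw [← Finset.sum_smul, mul_inv_rev, Units.val_mul, Matrix.mul_apply]

theorem glAct_one {d : ℕ} : glAct (1 : GL (Fin d) ℂ) = AlgHom.id ℂ (Ad d) := by
  apply MvPolynomial.algHom_ext
  intro j
  rw [glAct_X]
  simp [Matrix.one_apply]

/-- the action as a homomorphism -/
def sg {d n : ℕ} (S : CoxeterSetup d n) : S.Γ →* (Ad d →ₐ[ℂ] Ad d) where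
  toFun g := glAct (g : GL (Fin d) ℂ)
  map_one' := glAct_one
  map_mul' g h := glAct_mul _ _

theorem sg_apply {d n : ℕ} (S : CoxeterSetup d n) (g : S.Γ) (a : Ad d) :
    sg S g a = glAct (g : GL (Fin d) ℂ) a := rfl

/-- degree filtration -/
def Fil (d : ℕ) (k : ℕ) : AddSubgroup (Ad d) where
  carrier := {a | a = 0 ∨ a.totalDegree < k}
  zero_mem' := Or.inl rfl
  add_mem' := by
    rintro a b (rfl | ha) (rfl | hb)
    · left; simp
    · right; simpa using hb
    · right; simpa using ha
    · right
      exact (MvPolynomial.totalDegree_add a b).trans_lt (max_lt ha hb)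
  neg_mem' := by
    rintro a (rfl | ha)
    · left; simp
    · right; simpa using ha

theorem mem_Fil {d k : ℕ} (a : Ad d) : a ∈ Fil d k ↔ a = 0 ∨ a.totalDegree < k := Iff.rfl

theorem glAct_degree {d : ℕ} (g : GL (Fin d) ℂ) (a : Ad d) :
    (glAct g a).totalDegree ≤ a.totalDegree := by
  classical
  conv_lhs => rw [a.as_sum, map_sum]
  apply MvPolynomial.totalDegree_finsetSum_le
  intro m hm
  rw [glAct, MvPolynomial.aeval_monomial]
  refine (MvPolynomial.totalDegree_mul _ _).trans ?_
  rw [MvPolynomial.algebraMap_eq, MvPolynomial.totalDegree_C, zero_add]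
  refine le_trans ?_ (MvPolynomial.le_totalDegree hm)
  rw [Finsupp.prod, Finsupp.sum]
  refine (MvPolynomial.totalDegree_finsetProd _ _).trans ?_
  refine Finset.sum_le_sum fun i _ => ?_
  refine (MvPolynomial.totalDegree_pow _ _).trans ?_
  refine (Nat.mul_le_mul_left _ (?_ : _ ≤ 1)).trans (by simp)
  apply MvPolynomial.totalDegree_finsetSum_le
  intro k _
  exact (MvPolynomial.totalDegree_smul_le _ _).trans (by simp)

theorem lin_degree {d : ℕ} (θ : Vd d →ₗ[ℂ] ℂ) (h : θ ≠ 0) : (lin θ).totalDegree = 1 := by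
  apply le_antisymm
  · apply MvPolynomial.totalDegree_finsetSum_le
    intro k _
    exact (MvPolynomial.totalDegree_smul_le _ _).trans (by simp)
  · by_contra hlt
    have h0 : (lin θ).totalDegree = 0 := by omega
    rw [MvPolynomial.totalDegree_eq_zero_iff_eq_C] at h0
    apply h
    apply LinearMap.pi_ext'
    intro i
    ext
    have := coeff_linear (fun j => θ (Pi.single j 1)) i
    rw [show (∑ k, θ (Pi.single k 1) • (MvPolynomial.X k : Ad d)) = lin θ from rfl, h0,
      MvPolynomial.coeff_C, if_neg] at this
    · simpa using this.symm
    · intro hh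
      have := DFunLike.congr_fun hh i
      simp at this

theorem lin_prime {d : ℕ} (θ : Vd d →ₗ[ℂ] ℂ) (h : θ ≠ 0) : Prime (lin θ) := by
  rw [← UniqueFactorizationMonoid.irreducible_iff_prime]
  apply MvPolynomial.irreducible_of_totalDegree_eq_one (lin_degree θ h)
  intro x hx
  rw [isUnit_iff_ne_zero]
  rintro rfl
  have : lin θ = 0 := by
    ext m; simpa using hx m
  have h1 := lin_degree θ h
  rw [this] at h1
  simp at h1

section setup
variable {d n : ℕ} (S : CoxeterSetup d n)

theorem root_ne (i : Fin n) : S.α i ≠ 0 := by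
  intro h
  have := S.pairing i
  rw [h] at this
  simp at this

theorem s_inv (i : Fin n) : ((S.s i : GL (Fin d) ℂ))⁻¹ = (S.s i : GL (Fin d) ℂ) := by
  rw [inv_eq_iff_mul_eq_one]
  apply Units.ext
  apply Matrix.toLin'.injective
  ext1 j
  ext1
  rw [Units.val_mul, Matrix.toLin'_mul]
  simp only [LinearMap.comp_apply, Matrix.toLin'_apply, S.refl]
  simp only [map_sub, map_smul, S.pairing, Units.val_one, Matrix.one_mulVec, smul_eq_mul]
  module

theorem s_entry (i : Fin n) (j k : Fin d) :
    (((S.s i : GL (Fin d) ℂ)) : Matrix (Fin d) (Fin d) ℂ) j k =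
      (if j = k then 1 else 0) - S.α i (Pi.single k 1) * S.coroot i j := by
  have := congrFun (S.refl i (Pi.single k 1)) j
  rw [Matrix.mulVec_single_one] at this
  simpa [Matrix.col_apply, Pi.single_apply] using this

theorem s_X (i : Fin n) (j : Fin d) : glAct (S.s i : GL (Fin d) ℂ) (MvPolynomial.X j) =
    MvPolynomial.X j - S.coroot i j • lin (S.α i) := by
  rw [glAct_X, s_inv]
  simp only [s_entry, sub_smul, Finset.sum_sub_distrib, lin, Finset.smul_sum, smul_smul]
  congr 1
  · simp
  · refine Finset.sum_congr rfl fun k _ => ?_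
    rw [mul_comm]

theorem s_lin (i : Fin n) : glAct (S.s i : GL (Fin d) ℂ) (lin (S.α i)) = - lin (S.α i) := by
  have hp := S.pairing i
  have e : S.α i (S.coroot i) = ∑ j, S.α i (Pi.single j 1) * S.coroot i j := by
    conv_lhs => rw [LinearMap.pi_apply_eq_sum_univ (S.α i) (S.coroot i)]
    refine Finset.sum_congr rfl fun j _ => ?_
    rw [smul_eq_mul, mul_comm]
    congr 2
    ext k
    simp [Pi.single_apply, eq_comm]
  rw [e] at hp
  conv_lhs => rw [lin, map_sum]
  simp only [map_smul, s_X, smul_sub, Finset.sum_sub_distrib, smul_smul]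
  rw [← Finset.sum_smul, hp]
  change lin (S.α i) - _ = _
  module

theorem s_dvd (i : Fin n) (a : Ad d) : lin (S.α i) ∣ a - glAct (S.s i : GL (Fin d) ℂ) a := by
  induction a using MvPolynomial.induction_on with
  | C c => simp [← MvPolynomial.algebraMap_eq]
  | add p q hp hq =>
    rw [map_add, add_sub_add_comm]; exact dvd_add hp hq
  | mul_X p j hp =>
    rw [map_mul, s_X]
    have e : p * MvPolynomial.X j - glAct (S.s i : GL (Fin d) ℂ) p *
        (MvPolynomial.X j - S.coroot i j • lin (S.α i)) =
        (p - glAct (S.s i : GL (Fin d) ℂ) p) * MvPolynomial.X j +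
        lin (S.α i) * (MvPolynomial.C (S.coroot i j) * glAct (S.s i : GL (Fin d) ℂ) p) := by
      rw [MvPolynomial.smul_eq_C_mul]; ring
    rw [e]
    exact dvd_add (hp.mul_right _) (dvd_mul_right _ _)

theorem setupRG : RG (sg S) S.s (fun i => lin (S.α i)) (Fil d) where
  gen := S.gen
  prime i := lin_prime _ (root_ne S i)
  neg i := s_lin S i
  dvd i a := s_dvd S i a
  faith g hg := by
    rw [← inv_eq_one]
    apply Subtype.ext
    apply Units.ext
    ext j k
    have h1 := hg (MvPolynomial.X j)
    rw [sg_apply, glAct_X] at h1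
    have h2 := congrArg (MvPolynomial.coeff (Finsupp.single k 1)) h1
    rw [coeff_linear, MvPolynomial.coeff_X] at h2
    simp only [InvMemClass.coe_inv, OneMemClass.coe_one, Units.val_one]
    rw [h2, Matrix.one_apply]
    simp [Finsupp.single_left_inj]
  unit u hu := by
    rw [MvPolynomial.isUnit_iff_totalDegree_of_isReduced] at hu
    exact ⟨_, MvPolynomial.totalDegree_eq_zero_iff_eq_C.1 hu.2⟩
  F0 a ha := by
    rcases ha with h | h
    · exact h
    · exact absurd h (Nat.not_lt_zero _)
  Fex a := ⟨a.totalDegree + 1, Or.inr (Nat.lt_succ_self _)⟩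
  Fmono k l h a ha := ha.imp id fun h' => h'.trans_le h
  Fσ g k a ha := by
    rcases ha with rfl | ha
    · rw [map_zero]; exact zero_mem _
    · exact Or.inr ((glAct_degree _ _).trans_lt ha)
  Fα i k b hb := by
    by_cases h0 : b = 0
    · exact Or.inl h0
    · right
      rcases hb with h | h
      · exact absurd ((mul_eq_zero.1 h).resolve_left (lin_prime _ (root_ne S i)).ne_zero) h0
      · rw [MvPolynomial.totalDegree_mul_of_isDomain (lin_prime _ (root_ne S i)).ne_zero h0,
          lin_degree _ (root_ne S i)] at h
        omega

theorem mem_Fixed (Γ' : Subgroup S.Γ) (a : Ad d) :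
    a ∈ FixedSub S Γ' ↔ ∀ g ∈ Γ', glAct (g : GL (Fin d) ℂ) a = a := Iff.rfl

/-- a group element as a linear map over the invariants -/
def actLin (Γ' : Subgroup S.Γ) (g : S.Γ) (hg : g ∈ Γ') : Ad d →ₗ[FixedSub S Γ'] Ad d where
  toFun a := glAct (g : GL (Fin d) ℂ) a
  map_add' := map_add _
  map_smul' b a := by
    change glAct (g : GL (Fin d) ℂ) ((b : Ad d) * a) = (b : Ad d) * _
    rw [map_mul, b.2 g hg]

theorem fixed_zpowers (i : Fin n) (b : Ad d) (hb : b ∈ FixedSub S (Subgroup.zpowers (S.s i))) :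
    glAct (S.s i : GL (Fin d) ℂ) b = b := hb _ (Subgroup.mem_zpowers _)

/-- Demazure operator over the `s`-invariants -/
def dem (Γ' : Subgroup S.Γ) (i : Fin n) (hs : S.s i ∈ Γ') :
    Ad d →ₗ[FixedSub S Γ'] Ad d where
  toFun a := (s_dvd S i a).choose
  map_add' a b := by
    apply mul_left_cancel₀ (lin_prime _ (root_ne S i)).ne_zero
    rw [mul_add, ← (s_dvd S i _).choose_spec, ← (s_dvd S i _).choose_spec,
      ← (s_dvd S i _).choose_spec, map_add]
    ring
  map_smul' b a := by
    apply mul_left_cancel₀ (lin_prime _ (root_ne S i)).ne_zero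
    change _ = lin (S.α i) * ((b : Ad d) * _)
    rw [mul_left_comm, ← (s_dvd S i _).choose_spec, ← (s_dvd S i _).choose_spec]
    change (b : Ad d) * a - glAct _ ((b : Ad d) * a) = _
    rw [map_mul, b.2 _ hs]
    ring

theorem dem_spec (Γ' : Subgroup S.Γ) (i : Fin n) (hs : S.s i ∈ Γ') (a : Ad d) :
    a - glAct (S.s i : GL (Fin d) ℂ) a = lin (S.α i) * dem S Γ' i hs a :=
  (s_dvd S i a).choose_spec

theorem dem_mul (Γ' : Subgroup S.Γ) (i : Fin n) (hs : S.s i ∈ Γ') (a : Ad d) :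
    dem S Γ' i hs (lin (S.α i) * a) = a + glAct (S.s i : GL (Fin d) ℂ) a := by
  apply mul_left_cancel₀ (lin_prime _ (root_ne S i)).ne_zero
  rw [← dem_spec, map_mul, s_lin]
  ring

theorem half_smul {X : Type} [AddCommGroup X] [Module (Ad d) X] (x : X) (h : x + x = 0) :
    x = 0 := by
  have e : (MvPolynomial.C (2⁻¹ : ℂ) : Ad d) * 2 = 1 := by
    rw [← map_ofNat (MvPolynomial.C (σ := Fin d) (R := ℂ)) 2, ← map_mul]; norm_num
  rw [← one_smul (Ad d) x, ← e, mul_smul, two_smul, h, smul_zero]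

theorem two_part {X : Type} [AddCommGroup X] [Module (Ad d) X] (a : Ad d) (m0 m1 : X)
    (e : m0 + a • m1 = 0) (e' : m0 + (-a) • m1 = 0) : a • m1 = 0 := by
  apply half_smul (d := d)
  have : a • m1 + a • m1 = (m0 + a • m1) - (m0 + (-a) • m1) := by
    rw [neg_smul]; abel
  rw [this, e, e', sub_zero]

section M
variable (M : Type)
    [AddCommGroup M] [Module ℂ M] [Module (Ad d) M] [IsScalarTower ℂ (Ad d) M]
    (ρ : S.Γ →* Module.End ℂ M)

theorem M_decomp (i : Fin n)
    (h : Descends S (Subgroup.zpowers (S.s i)) M (ρ.comp (Subgroup.zpowers (S.s i)).subtype))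
    (m : M) : ∃ m0 m1, ρ (S.s i) m0 = m0 ∧ ρ (S.s i) m1 = m1 ∧ m = m0 + lin (S.α i) • m1 := by
  have : Finite S.Γ := S.finite
  have : Fintype S.Γ := Fintype.ofFinite _
  obtain ⟨N, _, _, e, he⟩ := h
  have he' : ∀ a x, ρ (S.s i) (e (a ⊗ₜ x)) = e (glAct (S.s i : GL (Fin d) ℂ) a ⊗ₜ x) :=
    fun a x => he ⟨S.s i, Subgroup.mem_zpowers _⟩ a x
  obtain ⟨t, rfl⟩ := e.surjective m
  induction t using TensorProduct.induction_on with
  | zero => exact ⟨0, 0, by simp, by simp, by simp⟩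
  | tmul a x =>
    obtain ⟨a0, a1, h0, h1, rfl⟩ := (setupRG S).decomp i a
    rw [sg_apply] at h0 h1
    refine ⟨e (a0 ⊗ₜ x), e (a1 ⊗ₜ x), by rw [he', h0], by rw [he', h1], ?_⟩
    rw [TensorProduct.add_tmul, map_add, ← map_smul, TensorProduct.smul_tmul', smul_eq_mul]
  | add t u ht hu =>
    obtain ⟨a, b, h1, h2, h3⟩ := ht
    obtain ⟨a', b', h1', h2', h3'⟩ := hu
    refine ⟨a + a', b + b', by rw [map_add, h1, h1'], by rw [map_add, h2, h2'], ?_⟩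
    rw [map_add, h3, h3', smul_add]; abel

theorem M_inj (i : Fin n)
    (h : Descends S (Subgroup.zpowers (S.s i)) M (ρ.comp (Subgroup.zpowers (S.s i)).subtype))
    (m : M) (hm : ρ (S.s i) m = m) (h0 : lin (S.α i) • m = 0) : m = 0 := by
  obtain ⟨N, _, _, e, he⟩ := h
  have he' : ∀ a x, ρ (S.s i) (e (a ⊗ₜ x)) = e (glAct (S.s i : GL (Fin d) ℂ) a ⊗ₜ x) :=
    fun a x => he ⟨S.s i, Subgroup.mem_zpowers _⟩ a x
  have key : ∀ t, e ((dem S _ i (Subgroup.mem_zpowers _)).rTensor N (lin (S.α i) • t)) = e t + ρ (S.s i) (e t) := by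
    intro t
    induction t using TensorProduct.induction_on with
    | zero => simp
    | tmul a x =>
      rw [TensorProduct.smul_tmul', smul_eq_mul, LinearMap.rTensor_tmul, dem_mul, he',
        TensorProduct.add_tmul, map_add]
    | add t u ht hu =>
      rw [smul_add, map_add, map_add, ht, hu, map_add, map_add]; abel
  obtain ⟨t, rfl⟩ := e.surjective m
  have h1 := key t
  rw [← map_smul] at h0
  rw [e.map_eq_zero_iff.1 h0, hm, map_zero, map_zero] at h1
  exact half_smul (d := d) _ h1.symm

/-- invariants as a module over the invariant ring -/
def invM (hρ : ∀ (g : S.Γ) (f : Ad d) (m : M),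
      ρ g (f • m) = glAct (g : GL (Fin d) ℂ) f • ρ g m) : Submodule (FixedSub S ⊤) M where
  carrier := {m | ∀ g, ρ g m = m}
  zero_mem' g := map_zero _
  add_mem' ha hb g := by rw [map_add, ha g, hb g]
  smul_mem' b m hm g := by
    change ρ g ((b : Ad d) • m) = (b : Ad d) • m
    rw [hρ, hm g, b.2 g trivial]

theorem uniqM (hρ : ∀ (g : S.Γ) (f : Ad d) (m : M),
      ρ g (f • m) = glAct (g : GL (Fin d) ℂ) f • ρ g m)
    (h : ∀ i : Fin n,
      Descends S (Subgroup.zpowers (S.s i)) M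
        (ρ.comp (Subgroup.zpowers (S.s i)).subtype))
    (i : Fin n) (m0 m1 : M) (h0 : ρ (S.s i) m0 = m0) (h1 : ρ (S.s i) m1 = m1)
    (e : m0 + lin (S.α i) • m1 = 0) : m1 = 0 := by
  have e' := congrArg (ρ (S.s i)) e
  rw [map_add, hρ, h0, h1, s_lin, map_zero] at e'
  apply M_inj S M ρ i (h i) m1 h1
  apply half_smul (d := d)
  have : lin (S.α i) • m1 + lin (S.α i) • m1 =
    (m0 + lin (S.α i) • m1) - (m0 + (-lin (S.α i)) • m1) := by
    rw [neg_smul]; abel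
  rw [this, e, e', sub_zero]

end M

section T
variable (N : Type) [AddCommGroup N] [Module (FixedSub S ⊤) N]

/-- the action on the induced module -/
def rhoT : S.Γ →* AddMonoid.End ((Ad d) ⊗[FixedSub S ⊤] N) where
  toFun g := ((actLin S ⊤ g (Subgroup.mem_top _)).rTensor N).toAddMonoidHom
  map_one' := by
    ext t
    change (actLin S ⊤ 1 (Subgroup.mem_top _)).rTensor N t = t
    have : actLin S ⊤ 1 (Subgroup.mem_top _) = LinearMap.id := by
      ext1 a; exact congrArg (fun F => F a) (glAct_one (d := d))
    rw [this, LinearMap.rTensor_id_apply]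
  map_mul' g g' := by
    ext t
    change (actLin S ⊤ (g * g') (Subgroup.mem_top _)).rTensor N t =
      (actLin S ⊤ g (Subgroup.mem_top _)).rTensor N ((actLin S ⊤ g' (Subgroup.mem_top _)).rTensor N t)
    have : actLin S ⊤ (g * g') (Subgroup.mem_top _) = actLin S ⊤ g (Subgroup.mem_top _) ∘ₗ actLin S ⊤ g' (Subgroup.mem_top _) := by
      ext1 a; exact congrArg (fun F => F a) (glAct_mul (g : GL (Fin d) ℂ) g')
    rw [this, LinearMap.rTensor_comp]; rfl

theorem rhoT_tmul (g : S.Γ) (a : Ad d) (x : N) :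
    rhoT S N g (a ⊗ₜ x) = (glAct (g : GL (Fin d) ℂ) a) ⊗ₜ x := rfl

theorem rhoT_smul (g : S.Γ) (a : Ad d) (t : (Ad d) ⊗[FixedSub S ⊤] N) :
    rhoT S N g (a • t) = glAct (g : GL (Fin d) ℂ) a • rhoT S N g t := by
  induction t using TensorProduct.induction_on with
  | zero => rw [smul_zero, map_zero, smul_zero]
  | tmul b x =>
    rw [TensorProduct.smul_tmul', rhoT_tmul, rhoT_tmul, TensorProduct.smul_tmul', smul_eq_mul,
      map_mul, smul_eq_mul]
  | add t u ht hu => rw [smul_add, map_add, map_add, ht, hu, smul_add]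

theorem rhoT_decomp (i : Fin n) (t : (Ad d) ⊗[FixedSub S ⊤] N) :
    ∃ t0 t1, rhoT S N (S.s i) t0 = t0 ∧ rhoT S N (S.s i) t1 = t1 ∧
      t = t0 + lin (S.α i) • t1 := by
  have : Finite S.Γ := S.finite
  have : Fintype S.Γ := Fintype.ofFinite _
  induction t using TensorProduct.induction_on with
  | zero => exact ⟨0, 0, map_zero _, map_zero _, by rw [smul_zero, add_zero]⟩
  | tmul a x =>
    obtain ⟨a0, a1, e0, e1, rfl⟩ := (setupRG S).decomp i a
    rw [sg_apply] at e0 e1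
    refine ⟨a0 ⊗ₜ x, a1 ⊗ₜ x, by rw [rhoT_tmul, e0], by rw [rhoT_tmul, e1], ?_⟩
    rw [TensorProduct.add_tmul, TensorProduct.smul_tmul', smul_eq_mul]
  | add t u ht hu =>
    obtain ⟨a, b, h1, h2, h3⟩ := ht
    obtain ⟨a', b', h1', h2', h3'⟩ := hu
    refine ⟨a + a', b + b', by rw [map_add, h1, h1'], by rw [map_add, h2, h2'], ?_⟩
    rw [h3, h3', smul_add, add_add_add_comm]

theorem rhoT_dem (i : Fin n) (t : (Ad d) ⊗[FixedSub S ⊤] N) :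
    (dem S ⊤ i (Subgroup.mem_top _)).rTensor N (lin (S.α i) • t) = t + rhoT S N (S.s i) t := by
  induction t using TensorProduct.induction_on with
  | zero => rw [smul_zero, map_zero, map_zero, add_zero]
  | tmul a x =>
    rw [TensorProduct.smul_tmul', smul_eq_mul, LinearMap.rTensor_tmul, dem_mul, rhoT_tmul,
      TensorProduct.add_tmul]
  | add t u ht hu =>
    rw [smul_add, map_add, ht, hu, map_add, add_add_add_comm]

theorem rhoT_uniq (i : Fin n) (m0 m1 : (Ad d) ⊗[FixedSub S ⊤] N)
    (h0 : rhoT S N (S.s i) m0 = m0) (h1 : rhoT S N (S.s i) m1 = m1)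
    (e : m0 + lin (S.α i) • m1 = 0) : m1 = 0 := by
  have e' := congrArg (rhoT S N (S.s i)) e
  rw [map_add, rhoT_smul, h0, h1, s_lin, map_zero] at e'
  have h2 : lin (S.α i) • m1 = 0 := two_part _ _ _ e e'
  have h3 := rhoT_dem S N i m1
  rw [h2, h1, map_zero] at h3
  exact half_smul (d := d) _ h3.symm

theorem rhoT_avg [Fintype S.Γ] (t : (Ad d) ⊗[FixedSub S ⊤] N) :
    ∃ x : N, ∑ g, rhoT S N g t = 1 ⊗ₜ x := by
  induction t using TensorProduct.induction_on with
  | zero => exact ⟨0, by simp only [map_zero, Finset.sum_const_zero, TensorProduct.tmul_zero]⟩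
  | tmul a x =>
    let b : FixedSub S ⊤ := ⟨∑ g : S.Γ, glAct (g : GL (Fin d) ℂ) a, by
      rw [mem_Fixed]
      intro h _
      rw [map_sum]
      refine Fintype.sum_equiv (Equiv.mulLeft h) _ _ (fun g => ?_)
      exact (congrArg (fun F => F a) (glAct_mul (h : GL (Fin d) ℂ) g)).symm⟩
    refine ⟨b • x, ?_⟩
    rw [← TensorProduct.smul_tmul]
    simp only [rhoT_tmul]
    rw [← TensorProduct.sum_tmul]
    congr 1
    exact (mul_one _).symm
  | add t u ht hu =>
    obtain ⟨x, hx⟩ := ht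
    obtain ⟨y, hy⟩ := hu
    refine ⟨x + y, ?_⟩
    simp only [map_add, Finset.sum_add_distrib]
    rw [hx, hy, TensorProduct.tmul_add]

end T

section fin
variable (M : Type)
    [AddCommGroup M] [Module ℂ M] [Module (Ad d) M] [IsScalarTower ℂ (Ad d) M]
    (ρ : S.Γ →* Module.End ℂ M)
    (hρ : ∀ (g : S.Γ) (f : Ad d) (m : M),
      ρ g (f • m) = glAct (g : GL (Fin d) ℂ) f • ρ g m)

theorem nsmul_cancel {X : Type} [AddCommGroup X] [Module (Ad d) X] (k : ℕ) (hk : k ≠ 0) (x : X)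
    (h : k • x = 0) : x = 0 := by
  have e : (MvPolynomial.C ((k : ℂ)⁻¹) : Ad d) * (k : Ad d) = 1 := by
    rw [← map_natCast (MvPolynomial.C (σ := Fin d) (R := ℂ)) k, ← map_mul,
      inv_mul_cancel₀ (Nat.cast_ne_zero.2 hk), map_one]
  rw [← one_smul (Ad d) x, ← e, mul_smul, Nat.cast_smul_eq_nsmul, h, smul_zero]

variable (N : Type) [AddCommGroup N] [Module (FixedSub S ⊤) N] (j : N →ₗ[FixedSub S ⊤] M)
  (hj : ∀ x g, ρ g (j x) = j x)

/-- the comparison map -/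
def cmap : (Ad d) ⊗[FixedSub S ⊤] N →ₗ[Ad d] M := j.liftBaseChange (Ad d)

theorem cmap_tmul (a : Ad d) (x : N) : cmap S M N j (a ⊗ₜ x) = a • j x := by
  rw [cmap, LinearMap.liftBaseChange_tmul]

include hρ hj

theorem cmap_rho (g : S.Γ) (t : (Ad d) ⊗[FixedSub S ⊤] N) :
    cmap S M N j (rhoT S N g t) = ρ g (cmap S M N j t) := by
  induction t using TensorProduct.induction_on with
  | zero => rw [map_zero, map_zero, map_zero]
  | tmul a x => rw [rhoT_tmul, cmap_tmul, cmap_tmul, hρ, hj]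
  | add t u ht hu => rw [map_add, map_add, ht, hu, map_add, map_add]

omit hρ hj in
/-- additive version of the action -/
def rhoM : S.Γ →* AddMonoid.End M where
  toFun g := (ρ g).toAddMonoidHom
  map_one' := by ext m; change ρ 1 m = m; simp
  map_mul' g g' := by ext m; change ρ (g * g') m = ρ g (ρ g' m); simp

theorem cmap_surj (hj' : ∀ m, (∀ g, ρ g m = m) → ∃ x, j x = m) (h : ∀ i : Fin n,
      Descends S (Subgroup.zpowers (S.s i)) M
        (ρ.comp (Subgroup.zpowers (S.s i)).subtype)) :
    Function.Surjective (cmap S M N j) := by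
  have : Finite S.Γ := S.finite
  have : Fintype S.Γ := Fintype.ofFinite _
  rw [← LinearMap.range_eq_top, ← top_le_iff]
  refine (setupRG S).main_lemma (rhoM S M ρ) hρ (fun i m => M_decomp S M ρ i (h i) m) _ ⊤
    ?_ (fun _ _ _ _ _ _ => trivial) (fun _ _ _ => trivial) ?_
  · intro i m0 m1 h0 h1 hm
    obtain ⟨t, ht⟩ := hm
    obtain ⟨t0, t1, e0, e1, e2⟩ := rhoT_decomp S N i t
    have e0' : ρ (S.s i) (cmap S M N j t0) = cmap S M N j t0 := by rw [← cmap_rho S M ρ hρ N j hj, e0]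
    have e1' : ρ (S.s i) (cmap S M N j t1) = cmap S M N j t1 := by rw [← cmap_rho S M ρ hρ N j hj, e1]
    rw [e2, map_add, LinearMap.map_smul] at ht
    generalize cmap S M N j t0 = u0 at *
    refine ⟨t1, ?_⟩
    generalize cmap S M N j t1 = u1 at *
    have := uniqM S M ρ hρ h i (u0 - m0) (u1 - m1)
      (by rw [map_sub, e0']; exact congrArg _ h0)
      (by rw [map_sub, e1']; exact congrArg _ h1) (by
        have e : u0 - m0 + lin (S.α i) • (u1 - m1) =
          (u0 + lin (S.α i) • u1) - (m0 + lin (S.α i) • m1) := by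
          rw [smul_sub]; abel
        rw [e, ht, sub_self])
    exact sub_eq_zero.1 this
  · intro m _ hm
    obtain ⟨x, rfl⟩ := hj' m hm
    exact ⟨1 ⊗ₜ x, by rw [cmap_tmul, one_smul]⟩

theorem cmap_inj (hj' : Function.Injective j) (h : ∀ i : Fin n,
      Descends S (Subgroup.zpowers (S.s i)) M
        (ρ.comp (Subgroup.zpowers (S.s i)).subtype)) :
    Function.Injective (cmap S M N j) := by
  have : Finite S.Γ := S.finite
  have : Fintype S.Γ := Fintype.ofFinite _
  rw [← LinearMap.ker_eq_bot, ← le_bot_iff]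
  refine (setupRG S).main_lemma (rhoT S N) (rhoT_smul S N) (rhoT_decomp S N) ⊥ _ ?_ ?_ ?_ ?_
  · intro i t0 t1 h0 h1 ht
    exact rhoT_uniq S N i t0 t1 h0 h1 ht
  · intro i t0 t1 h0 h1 ht
    have ht' : cmap S M N j (t0 + lin (S.α i) • t1) = 0 := ht
    rw [map_add, LinearMap.map_smul] at ht'
    exact uniqM S M ρ hρ h i _ _ (by rw [← cmap_rho S M ρ hρ N j hj, h0]) (by rw [← cmap_rho S M ρ hρ N j hj, h1]) ht'
  · intro g t ht
    have ht' : cmap S M N j t = 0 := ht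
    change cmap S M N j _ = 0
    rw [cmap_rho S M ρ hρ N j hj, ht', map_zero]
  · intro t ht hinv
    have ht' : cmap S M N j t = 0 := ht
    obtain ⟨x, hx⟩ := rhoT_avg S N t
    have h1 := congrArg (cmap S M N j) hx
    rw [map_sum, cmap_tmul, one_smul] at h1
    simp only [cmap_rho S M ρ hρ N j hj, ht', map_zero, Finset.sum_const_zero] at h1
    have hx0 : x = 0 := hj' (by rw [← h1, map_zero])
    rw [hx0, TensorProduct.tmul_zero] at hx
    simp only [hinv, Finset.sum_const] at hx
    exact nsmul_cancel (d := d) _ (Finset.card_ne_zero.2 Finset.univ_nonempty) t hx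

theorem descends_of (hi : Function.Injective j)
    (hs : ∀ m, (∀ g, ρ g m = m) → ∃ x, j x = m) (h : ∀ i : Fin n,
      Descends S (Subgroup.zpowers (S.s i)) M
        (ρ.comp (Subgroup.zpowers (S.s i)).subtype)) :
    Descends S ⊤ M (ρ.comp (Subgroup.subtype ⊤)) :=
  ⟨N, inferInstance, inferInstance,
    LinearEquiv.ofBijective (cmap S M N j)
      ⟨cmap_inj S M ρ hρ N j hj hi h, cmap_surj S M ρ hρ N j hj hs h⟩,
    fun g a x => (cmap_rho S M ρ hρ N j hj g (a ⊗ₜ x)).symm⟩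

end fin
end setup

/-- If a `Γ`-equivariant `A`-module `M` descends to `A^{⟨sᵢ⟩}` for every
simple reflection `sᵢ`, then `M` descends to `A^Γ`. -/
theorem descent_of_simple_descent {d n : ℕ} (S : CoxeterSetup d n) (M : Type)
    [AddCommGroup M] [Module ℂ M] [Module (Ad d) M] [IsScalarTower ℂ (Ad d) M]
    (ρ : S.Γ →* Module.End ℂ M)
    (hρ : ∀ (g : S.Γ) (f : Ad d) (m : M),
      ρ g (f • m) = glAct (g : GL (Fin d) ℂ) f • ρ g m)
    (h : ∀ i : Fin n,
      Descends S (Subgroup.zpowers (S.s i)) M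
        (ρ.comp (Subgroup.zpowers (S.s i)).subtype)) :
    Descends S ⊤ M (ρ.comp (Subgroup.subtype ⊤)) := by
  have hj : ∀ x g, ρ g ((invM S M ρ hρ).subtype x) = (invM S M ρ hρ).subtype x := fun x g => x.2 g
  have hi : Function.Injective (invM S M ρ hρ).subtype := Subtype.val_injective
  exact @descends_of d n S M _ _ _ _ ρ hρ (invM S M ρ hρ) (invM S M ρ hρ).addCommGroup
    (invM S M ρ hρ).module (invM S M ρ hρ).subtype hj hi (fun m hm => ⟨⟨m, hm⟩, rfl⟩) h
end
end

section
/- For every integer j with 0 ≤ j < m, one has r_j = r'_{m−1−j}; that is, the sequence of m vectors α, s_α(β), s_α s_β(α), … is the reverse of the sequence β, s_β(α), s_β s_α(β), …. Consequently the product of the members of the first sequence equals the product of the members of the second (as elements of the polynomial ring on the plane). -/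
noncomputable section

open scoped RealInnerProductSpace

/-- Alternating product `x·y·x·⋯` with `m` factors, starting with `x`. -/
def altProd {M : Type*} [Monoid M] (x y : M) : ℕ → M
  | 0 => 1
  | (j + 1) => x * altProd y x j

/-- The Euclidean plane. -/
abbrev E2 := EuclideanSpace ℝ (Fin 2)

/-- Orthogonal reflection of the plane fixing the hyperplane `α^⊥`. -/
def refl2 (α : E2) : E2 ≃ₗᵢ[ℝ] E2 := Submodule.reflection (ℝ ∙ α)ᗮ

/-- The root sequence `r_0 = α, r_1 = s_α(β), r_2 = s_α s_β(α), …`. -/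
def rootSeq (α β : E2) (j : ℕ) : E2 :=
  altProd (refl2 α) (refl2 β) j (if Even j then α else β)

/-- A vector of the plane, viewed as a degree-one element of the polynomial ring on the
plane. -/
def toPoly (v : E2) : MvPolynomial (Fin 2) ℝ :=
  ∑ i, v i • MvPolynomial.X i

lemma refl2_apply_unit (α v : E2) (hα : ‖α‖ = 1) : refl2 α v = v - (2 * ⟪α, v⟫) • α := by
  unfold refl2
  rw [Submodule.reflection_orthogonal_apply, Submodule.reflection_singleton_apply]
  simp only [hα]
  norm_num
  module

lemma sin_smul_rootSeq (t : ℝ) (j : ℕ) : ∀ (α β : E2), ‖α‖ = 1 → ‖β‖ = 1 →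
    ⟪α, β⟫ = -Real.cos t →
    Real.sin t • rootSeq α β j = Real.sin ((j + 1) * t) • α + Real.sin (j * t) • β := by
  induction j with
  | zero => intro α β _ _ _; simp [rootSeq, altProd]
  | succ j ih =>
    intro α β hα hβ h
    have h1 : rootSeq α β (j + 1) = refl2 α (rootSeq β α j) := by
      unfold rootSeq
      simp only [altProd, LinearIsometryEquiv.coe_mul, Function.comp_apply, Nat.even_add_one]
      split_ifs <;> rfl
    rw [h1, ← LinearIsometryEquiv.map_smul, ih β α hβ hα (by rw [real_inner_comm]; exact h),
      map_add, LinearIsometryEquiv.map_smul, LinearIsometryEquiv.map_smul,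
      refl2_apply_unit α β hα, refl2_apply_unit α α hα, h, real_inner_self_eq_norm_sq, hα]
    have h2 : Real.sin (((j + 1 : ℕ) + 1 : ℝ) * t)
        = 2 * Real.cos t * Real.sin ((j + 1) * t) - Real.sin (j * t) := by
      have e1 : ((j + 1 : ℕ) + 1 : ℝ) * t = (j + 1) * t + t := by push_cast; ring
      have e2 : (j : ℝ) * t = (j + 1) * t - t := by ring
      rw [e1, e2, Real.sin_add, Real.sin_sub]; ring
    rw [h2]
    push_cast
    module

/-- If `α, β` are unit vectors with `⟪α, β⟫ = −cos(π/m)`, then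
`r_j = r'_{m−1−j}` for `0 ≤ j < m` (the two root sequences are reverses of one another);
consequently the products of their members agree in the polynomial ring on the plane. -/
theorem rootSeq_reverse (m : ℕ) (hm : 2 ≤ m) (α β : E2)
    (hα : ‖α‖ = 1) (hβ : ‖β‖ = 1)
    (hαβ : ⟪α, β⟫ = -Real.cos (Real.pi / m)) :
    (∀ j < m, rootSeq α β j = rootSeq β α (m - 1 - j)) ∧
    ∏ j ∈ Finset.range m, toPoly (rootSeq α β j) =
      ∏ j ∈ Finset.range m, toPoly (rootSeq β α j) := by
  have hm0 : (2 : ℝ) ≤ m := by exact_mod_cast hm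
  have hs : Real.sin (Real.pi / m) ≠ 0 := by
    apply ne_of_gt
    apply Real.sin_pos_of_pos_of_lt_pi
    · have := Real.pi_pos
      positivity
    · rw [div_lt_iff₀ (by linarith)]
      nlinarith [Real.pi_pos]
  have key : ∀ j < m, rootSeq α β j = rootSeq β α (m - 1 - j) := by
    intro j hj
    apply smul_right_injective E2 hs
    simp only
    rw [sin_smul_rootSeq _ j α β hα hβ hαβ,
      sin_smul_rootSeq _ _ β α hβ hα (by rw [real_inner_comm]; exact hαβ)]
    have hc : ((m - 1 - j : ℕ) : ℝ) = m - 1 - j := by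
      rw [Nat.cast_sub (by omega), Nat.cast_sub (by omega)]; simp
    have e1 : ((m : ℝ) - 1 - j + 1) * (Real.pi / m) = Real.pi - j * (Real.pi / m) := by
      field_simp; ring
    have e2 : ((m : ℝ) - 1 - j) * (Real.pi / m) = Real.pi - (j + 1) * (Real.pi / m) := by
      field_simp; ring
    rw [hc, e1, e2, Real.sin_pi_sub, Real.sin_pi_sub, add_comm]
  refine ⟨key, ?_⟩
  rw [← Finset.prod_range_reflect (fun j => toPoly (rootSeq β α j))]
  exact Finset.prod_congr rfl fun j hj => by rw [key j (Finset.mem_range.mp hj)]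
end
end
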